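/- arXiv:2410.00870 — 2 statements merged into one kernel-verified Lean document; each statement's English description precedes it below -/
import Mathlib

section
/- Let a, b ∈ ℚ and suppose f(x) = x^12 + a·x^6 + b is irreducible over ℚ, and let θ ∈ ℂ be a root of f. Then for every r ∈ ℚ that is not a square in ℚ, r is a square in the field ℚ(θ) (the subfield of ℂ generated over ℚ by θ) if and only if r·(a^2 − 4b) is a square in ℚ, or there exists s ∈ ℚ with s^2 = b such that r·(−a + 2s) is a square in ℚ or r·(−a − 2s) is a square in ℚ. -/
open Polynomial

/-!
Put `u = θ ^ 3` and `v = θ ^ 6`. Since `[ℚ(θ) : ℚ(u)] = 3` is odd, the norm shows that `r` is a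
square in `ℚ(θ)` iff it is one in `ℚ(u)`. The latter is the quadratic extension of `ℚ(v)` by `√v`,
so this happens iff `r` or `r * v` is a square in `ℚ(v)`. Finally `ℚ(v) = ℚ(δ)` with
`δ = 2 * v + a` and `δ ^ 2 = a ^ 2 - 4 * b`. Hence `r` is a square there iff `r` or
`r * (a ^ 2 - 4 * b)` is a rational square, while `r * v = -r * a / 2 + (r / 2) * δ` has norm
`r ^ 2 * b` and trace `-r * a`, so it is a square iff `b = s ^ 2` and `-r * a + 2 * r * s` is a
square for some rational `s`.
-/

open IntermediateField hiding algebraMap_mem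

lemma exists_sq_eq_iff_isSquare {M : Type*} [Monoid M] {r : M} : (∃ s, s ^ 2 = r) ↔ IsSquare r := by
  simp only [isSquare_iff_exists_sq, eq_comm]

lemma exists_sq_eq_and_or_neg_iff {R : Type*} [Monoid R] [HasDistribNeg R] {b : R} {p : R → Prop} :
    (∃ s, s ^ 2 = b ∧ (p s ∨ p (-s))) ↔ ∃ s, s ^ 2 = b ∧ p s := by
  constructor
  · rintro ⟨s, hs, hp | hp⟩
    · exact ⟨s, hs, hp⟩
    · exact ⟨-s, (neg_sq s).trans hs, hp⟩
  · rintro ⟨s, hs, hp⟩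
    exact ⟨s, hs, .inl hp⟩

lemma isSquare_pow_iff_of_odd {G : Type*} [CommGroupWithZero G] {r : G} {n : ℕ} (hn : Odd n) :
    IsSquare (r ^ n) ↔ IsSquare r := by
  refine ⟨fun h => ?_, IsSquare.pow n⟩
  obtain ⟨k, rfl⟩ := hn
  rcases eq_or_ne r 0 with rfl | hr
  · exact IsSquare.zero
  · have hdiv : r ^ (2 * k + 1) / (r ^ k) ^ 2 = r := by
      rw [← pow_mul, mul_comm k 2, pow_succ', mul_div_cancel_right₀ _ (pow_ne_zero _ hr)]
    exact hdiv ▸ h.div (IsSquare.sq _)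

section FieldExtension

variable {K L : Type*} [Field K] [Field L] [Algebra K L]

lemma isSquare_algebraMap_iff_of_odd_finrank (hodd : Odd (Module.finrank K L)) {r : K} :
    IsSquare (algebraMap K L r) ↔ IsSquare r := by
  refine ⟨fun h => ?_, IsSquare.map _⟩
  rw [← isSquare_pow_iff_of_odd hodd, ← Algebra.norm_algebraMap]
  exact h.map (Algebra.norm K)

lemma isSquare_iff_exists_mem_sq_eq {F : IntermediateField K L} {x : F} :
    IsSquare x ↔ ∃ z ∈ F, z ^ 2 = (x : L) := by
  simp [← exists_sq_eq_iff_isSquare, Subtype.ext_iff]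

lemma mem_adjoin_adjoin_pow_iff {θ z : L} (n : ℕ) : z ∈ K⟮θ ^ n⟯⟮θ⟯ ↔ z ∈ K⟮θ⟯ := by
  rw [← mem_restrictScalars K, adjoin_simple_adjoin_simple]
  have hle : K⟮θ ^ n, θ⟯ = K⟮θ⟯ := by
    refine le_antisymm (adjoin_le_iff.2 ?_) (adjoin.mono _ _ _ (by simp))
    rintro x (rfl | rfl)
    · exact pow_mem (mem_adjoin_simple_self K θ) n
    · exact mem_adjoin_simple_self K _
  rw [hle]

lemma finrank_adjoin_simple_of_irreducible {P : K[X]} (hP : Irreducible P) {θ : L}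
    (hθ : aeval θ P = 0) : Module.finrank K K⟮θ⟯ = P.natDegree := by
  have hint : IsIntegral K θ := IsAlgebraic.isIntegral ⟨P, hP.ne_zero, hθ⟩
  rw [adjoin.finrank hint, ← minpoly.eq_of_irreducible hP hθ,
    natDegree_mul_C (inv_ne_zero (leadingCoeff_ne_zero.2 hP.ne_zero))]

lemma finrank_adjoin_pow_adjoin_simple {P : K[X]} {n : ℕ} (hn : n ≠ 0)
    (hirr : Irreducible (expand K n P)) {θ : L} (hθ : aeval θ (expand K n P) = 0) :
    Module.finrank K⟮θ ^ n⟯ K⟮θ ^ n⟯⟮θ⟯ = n := by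
  have hP : Irreducible P := of_irreducible_expand hn hirr
  have hbase : Module.finrank K K⟮θ ^ n⟯ = P.natDegree :=
    finrank_adjoin_simple_of_irreducible hP (by rwa [expand_aeval] at hθ)
  have htop : Module.finrank K K⟮θ ^ n⟯⟮θ⟯ = P.natDegree * n := by
    have heq : K⟮θ ^ n⟯⟮θ⟯.restrictScalars K = K⟮θ⟯ :=
      IntermediateField.ext fun z => mem_adjoin_adjoin_pow_iff n
    rw [← natDegree_expand, ← finrank_adjoin_simple_of_irreducible hirr hθ, ← heq]
    rfl
  have htower := Module.finrank_mul_finrank K K⟮θ ^ n⟯ K⟮θ ^ n⟯⟮θ⟯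
  rw [hbase, htop] at htower
  exact Nat.eq_of_mul_eq_mul_left hP.natDegree_pos htower

lemma exists_mem_adjoin_sq_eq_iff_of_odd {P : K[X]} {n : ℕ} (hn : Odd n)
    (hirr : Irreducible (expand K n P)) {θ : L} (hθ : aeval θ (expand K n P) = 0)
    (x : K⟮θ ^ n⟯) :
    (∃ y ∈ K⟮θ⟯, y ^ 2 = (x : L)) ↔ ∃ z ∈ K⟮θ ^ n⟯, z ^ 2 = (x : L) := by
  have hodd : Odd (Module.finrank K⟮θ ^ n⟯ K⟮θ ^ n⟯⟮θ⟯) := by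
    rwa [finrank_adjoin_pow_adjoin_simple hn.pos.ne' hirr hθ]
  rw [← isSquare_iff_exists_mem_sq_eq, ← isSquare_algebraMap_iff_of_odd_finrank hodd,
    isSquare_iff_exists_mem_sq_eq]
  simp only [mem_adjoin_adjoin_pow_iff]
  rfl

section SquareRoot

variable {δ : L} {d : K}

lemma mem_adjoin_simple_iff_of_sq_eq (hδ : δ ^ 2 = algebraMap K L d) {z : L} :
    z ∈ K⟮δ⟯ ↔ ∃ x y : K, z = algebraMap K L x + algebraMap K L y * δ := by
  have hroot : aeval δ (X ^ 2 - C d) = 0 := by simp [hδ]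
  have hmonic : (X ^ 2 - C d).Monic := monic_X_pow_sub_C d two_ne_zero
  constructor
  · intro hz
    rw [← mem_toSubalgebra, adjoin_simple_toSubalgebra_of_isAlgebraic ⟨_, hmonic.ne_zero, hroot⟩,
      Algebra.adjoin_singleton_eq_range_aeval] at hz
    obtain ⟨p, rfl⟩ := hz
    have hdeg : (p %ₘ (X ^ 2 - C d)).natDegree ≤ 1 := by
      have hlt := natDegree_modByMonic_lt p hmonic (by
        intro h; simpa [h] using natDegree_X_pow_sub_C (n := 2) (r := d))
      rw [natDegree_X_pow_sub_C] at hlt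
      omega
    obtain ⟨y, x, hyx⟩ := exists_eq_X_add_C_of_natDegree_le_one hdeg
    refine ⟨x, y, ?_⟩
    change aeval δ p = _
    rw [← aeval_modByMonic_eq_self_of_root hroot, hyx]
    simp [add_comm]
  · rintro ⟨x, y, rfl⟩
    exact add_mem (algebraMap_mem _ x) (mul_mem (algebraMap_mem _ y) (mem_adjoin_simple_self K δ))

lemma add_mul_eq_add_mul_iff_of_notMem_bot (hδ : δ ∉ (⊥ : IntermediateField K L)) {x y p q : K} :
    algebraMap K L x + algebraMap K L y * δ = algebraMap K L p + algebraMap K L q * δ ↔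
      x = p ∧ y = q := by
  refine ⟨fun h => ?_, by rintro ⟨rfl, rfl⟩; rfl⟩
  have hyq : y = q := by
    by_contra hne
    have hne' : algebraMap K L y - algebraMap K L q ≠ 0 :=
      sub_ne_zero.2 ((algebraMap K L).injective.ne hne)
    refine hδ (mem_bot.2 ⟨(p - x) / (y - q), ?_⟩)
    rw [map_div₀, map_sub, map_sub, div_eq_iff hne']
    linear_combination -h
  subst hyq
  exact ⟨(algebraMap K L).injective (add_right_cancel h), rfl⟩

lemma exists_mem_adjoin_sq_eq_add_mul_iff (hd : δ ^ 2 = algebraMap K L d)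
    (hδ : δ ∉ (⊥ : IntermediateField K L)) {p q : K} :
    (∃ z ∈ K⟮δ⟯, z ^ 2 = algebraMap K L p + algebraMap K L q * δ) ↔
      ∃ x y : K, x ^ 2 + d * y ^ 2 = p ∧ 2 * x * y = q := by
  have hsq (x y : K) : (algebraMap K L x + algebraMap K L y * δ) ^ 2 =
      algebraMap K L (x ^ 2 + d * y ^ 2) + algebraMap K L (2 * x * y) * δ := by
    simp only [map_add, map_mul, map_pow, map_ofNat]
    linear_combination (algebraMap K L y) ^ 2 * hd
  constructor
  · rintro ⟨z, hz, hzpq⟩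
    obtain ⟨x, y, rfl⟩ := (mem_adjoin_simple_iff_of_sq_eq hd).1 hz
    exact ⟨x, y, (add_mul_eq_add_mul_iff_of_notMem_bot hδ).1 ((hsq x y).symm.trans hzpq)⟩
  · rintro ⟨x, y, rfl, rfl⟩
    exact ⟨_, (mem_adjoin_simple_iff_of_sq_eq hd).2 ⟨x, y, rfl⟩, hsq x y⟩

lemma ne_zero_of_sq_eq_algebraMap_of_notMem_bot (hd : δ ^ 2 = algebraMap K L d)
    (hδ : δ ∉ (⊥ : IntermediateField K L)) : d ≠ 0 := by
  rintro rfl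
  rw [map_zero, sq_eq_zero_iff] at hd
  exact hδ (hd ▸ zero_mem _)

lemma exists_mem_adjoin_sq_eq_algebraMap_iff (h2 : (2 : K) ≠ 0) (hd : δ ^ 2 = algebraMap K L d)
    (hδ : δ ∉ (⊥ : IntermediateField K L)) {r : K} :
    (∃ z ∈ K⟮δ⟯, z ^ 2 = algebraMap K L r) ↔ IsSquare r ∨ IsSquare (r * d) := by
  have hd0 : d ≠ 0 := ne_zero_of_sq_eq_algebraMap_of_notMem_bot hd hδ
  have key := exists_mem_adjoin_sq_eq_add_mul_iff hd hδ (p := r) (q := 0)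
  rw [map_zero, zero_mul, add_zero] at key
  simp only [key, ← exists_sq_eq_iff_isSquare]
  constructor
  · rintro ⟨x, y, hr, hxy⟩
    obtain rfl | rfl : x = 0 ∨ y = 0 := by simpa [h2] using hxy
    · exact .inr ⟨d * y, by linear_combination d * hr⟩
    · exact .inl ⟨x, by linear_combination hr⟩
  · rintro (⟨x, hx⟩ | ⟨w, hw⟩)
    · exact ⟨x, 0, by linear_combination hx, by ring⟩
    · refine ⟨0, w / d, ?_, by ring⟩
      field_simp
      linear_combination hw

lemma exists_mem_adjoin_sq_eq_add_mul_iff_norm (h2 : (2 : K) ≠ 0) (hd : δ ^ 2 = algebraMap K L d)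
    (hδ : δ ∉ (⊥ : IntermediateField K L)) {p q : K} (hq : q ≠ 0) :
    (∃ z ∈ K⟮δ⟯, z ^ 2 = algebraMap K L p + algebraMap K L q * δ) ↔
      ∃ s : K, s ^ 2 = p ^ 2 - d * q ^ 2 ∧ IsSquare (2 * (p + s)) := by
  simp only [exists_mem_adjoin_sq_eq_add_mul_iff hd hδ, ← exists_sq_eq_iff_isSquare]
  constructor
  · -- `s` is the norm of the square root `x + y * δ`.
    rintro ⟨x, y, rfl, rfl⟩
    exact ⟨x ^ 2 - d * y ^ 2, by ring, 2 * x, by ring⟩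
  · rintro ⟨s, hs, t, ht⟩
    have ht0 : t ≠ 0 := by
      rintro rfl
      have hps : p + s = 0 := by simpa [h2] using ht.symm
      have hdq : d * q ^ 2 = 0 := by linear_combination (p - s) * hps + hs
      exact mul_ne_zero (ne_zero_of_sq_eq_algebraMap_of_notMem_bot hd hδ) (pow_ne_zero 2 hq) hdq
    refine ⟨t / 2, q / t, ?_, by field_simp⟩
    field_simp
    linear_combination (t ^ 2 + 2 * s - 2 * p) * ht + 4 * hs

end SquareRoot

lemma adjoin_simple_mul_add_eq {c e : K} (hc : c ≠ 0) (v : L) :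
    K⟮algebraMap K L c * v + algebraMap K L e⟯ = K⟮v⟯ := by
  apply le_antisymm <;> rw [adjoin_simple_le_iff]
  · exact add_mem (mul_mem (algebraMap_mem _ c) (mem_adjoin_simple_self K v)) (algebraMap_mem _ e)
  · have hgen := mem_adjoin_simple_self K (algebraMap K L c * v + algebraMap K L e)
    simpa [hc] using div_mem (sub_mem hgen (algebraMap_mem _ e)) (algebraMap_mem _ c)

section QuadraticRoot

variable {a b : K} {v : L}

lemma two_mul_add_sq_eq_discrim (hv : v ^ 2 + algebraMap K L a * v + algebraMap K L b = 0) :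
    (algebraMap K L 2 * v + algebraMap K L a) ^ 2 = algebraMap K L (a ^ 2 - 4 * b) := by
  simp only [map_sub, map_mul, map_pow, map_ofNat]
  linear_combination 4 * hv

lemma two_mul_add_notMem_bot (h2 : (2 : K) ≠ 0) (hvbot : v ∉ (⊥ : IntermediateField K L)) :
    algebraMap K L 2 * v + algebraMap K L a ∉ (⊥ : IntermediateField K L) := by
  rwa [← adjoin_simple_eq_bot_iff, adjoin_simple_mul_add_eq h2, adjoin_simple_eq_bot_iff]

lemma exists_mem_adjoin_quadratic_root_sq_eq_algebraMap_iff (h2 : (2 : K) ≠ 0)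
    (hv : v ^ 2 + algebraMap K L a * v + algebraMap K L b = 0)
    (hvbot : v ∉ (⊥ : IntermediateField K L)) {r : K} :
    (∃ z ∈ K⟮v⟯, z ^ 2 = algebraMap K L r) ↔ IsSquare r ∨ IsSquare (r * (a ^ 2 - 4 * b)) := by
  rw [← adjoin_simple_mul_add_eq (e := a) h2 v]
  exact exists_mem_adjoin_sq_eq_algebraMap_iff h2 (two_mul_add_sq_eq_discrim hv)
    (two_mul_add_notMem_bot h2 hvbot)

lemma exists_mem_adjoin_quadratic_root_sq_eq_mul_iff (h2 : (2 : K) ≠ 0)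
    (hv : v ^ 2 + algebraMap K L a * v + algebraMap K L b = 0)
    (hvbot : v ∉ (⊥ : IntermediateField K L)) {r : K} (hr : r ≠ 0) :
    (∃ z ∈ K⟮v⟯, z ^ 2 = algebraMap K L r * v) ↔
      ∃ s : K, s ^ 2 = b ∧ IsSquare (r * (-a + 2 * s)) := by
  have h2L : (2 : L) ≠ 0 := by rwa [← map_ofNat (algebraMap K L) 2, _root_.map_ne_zero]
  have hrv : algebraMap K L r * v = algebraMap K L (-(r * a) / 2) +
      algebraMap K L (r / 2) * (algebraMap K L 2 * v + algebraMap K L a) := by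
    simp only [map_div₀, map_neg, map_mul, map_ofNat]
    field_simp
    ring
  rw [hrv, ← adjoin_simple_mul_add_eq (e := a) h2 v,
    exists_mem_adjoin_sq_eq_add_mul_iff_norm h2 (two_mul_add_sq_eq_discrim hv)
      (two_mul_add_notMem_bot h2 hvbot) (div_ne_zero hr h2)]
  have hnorm : (-(r * a) / 2) ^ 2 - (a ^ 2 - 4 * b) * (r / 2) ^ 2 = r ^ 2 * b := by
    field_simp
    ring
  have hfactor (s : K) : 2 * (-(r * a) / 2 + r * s) = r * (-a + 2 * s) := by
    field_simp
  rw [hnorm]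
  refine (mulLeft_bijective₀ r hr).surjective.exists.trans ?_
  simp only [hfactor, mul_pow, mul_right_inj' (pow_ne_zero 2 hr)]

end QuadraticRoot

theorem exists_mem_adjoin_biquadratic_root_sq_eq_iff (h2 : (2 : K) ≠ 0) {a b : K}
    (hirr : Irreducible (X ^ 4 + C a * X ^ 2 + C b)) {u : L}
    (hu : aeval u (X ^ 4 + C a * X ^ 2 + C b) = 0) {r : K} :
    (∃ z ∈ K⟮u⟯, z ^ 2 = algebraMap K L r) ↔
      IsSquare r ∨ IsSquare (r * (a ^ 2 - 4 * b)) ∨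
        ∃ s : K, s ^ 2 = b ∧ IsSquare (r * (-a + 2 * s)) := by
  rcases eq_or_ne r 0 with rfl | hr
  · exact iff_of_true ⟨0, zero_mem _, by simp⟩ (.inl .zero)
  have hexpand : X ^ 4 + C a * X ^ 2 + C b = expand K 2 (X ^ 2 + C a * X + C b) := by
    simp [← pow_mul]
  rw [hexpand] at hirr hu
  have hv : (u ^ 2) ^ 2 + algebraMap K L a * u ^ 2 + algebraMap K L b = 0 := by
    simpa [expand_aeval] using hu
  have hvbot : u ^ 2 ∉ (⊥ : IntermediateField K L) := by
    rw [← finrank_adjoin_simple_eq_one_iff, finrank_adjoin_simple_of_irreducible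
      (of_irreducible_expand two_ne_zero hirr) (by rwa [expand_aeval] at hu)]
    have hdeg : (X ^ 2 + C a * X + C b).natDegree = 2 := by compute_degree!
    simp [hdeg]
  have hubot : u ∉ (⊥ : IntermediateField K⟮u ^ 2⟯ L) := by
    rw [← finrank_adjoin_simple_eq_one_iff,
      finrank_adjoin_pow_adjoin_simple two_ne_zero hirr hu]
    decide
  have h2E : (2 : K⟮u ^ 2⟯) ≠ 0 := by
    rwa [← map_ofNat (algebraMap K K⟮u ^ 2⟯) 2, _root_.map_ne_zero]
  calc (∃ z ∈ K⟮u⟯, z ^ 2 = algebraMap K L r)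
      ↔ ∃ z ∈ K⟮u ^ 2⟯⟮u⟯, z ^ 2 = algebraMap K⟮u ^ 2⟯ L (algebraMap K _ r) := by
        simp only [mem_adjoin_adjoin_pow_iff]
        rfl
    _ ↔ IsSquare (algebraMap K K⟮u ^ 2⟯ r) ∨
          IsSquare (algebraMap K K⟮u ^ 2⟯ r * AdjoinSimple.gen K (u ^ 2)) :=
        exists_mem_adjoin_sq_eq_algebraMap_iff h2E (AdjoinSimple.algebraMap_gen K (u ^ 2)).symm
          hubot
    _ ↔ (∃ z ∈ K⟮u ^ 2⟯, z ^ 2 = algebraMap K L r) ∨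
          ∃ z ∈ K⟮u ^ 2⟯, z ^ 2 = algebraMap K L r * u ^ 2 := by
        simp only [isSquare_iff_exists_mem_sq_eq]
        rfl
    _ ↔ (IsSquare r ∨ IsSquare (r * (a ^ 2 - 4 * b))) ∨
          ∃ s : K, s ^ 2 = b ∧ IsSquare (r * (-a + 2 * s)) := by
        rw [exists_mem_adjoin_quadratic_root_sq_eq_algebraMap_iff h2 hv hvbot,
          exists_mem_adjoin_quadratic_root_sq_eq_mul_iff h2 hv hvbot hr]
    _ ↔ _ := or_assoc

theorem square_in_dodecic_stem_field_iff_general (h2 : (2 : K) ≠ 0) {n : ℕ} (hn : Odd n) {a b : K}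
    {f : K[X]} (hf : f = X ^ (4 * n) + C a * X ^ (2 * n) + C b) (hirr : Irreducible f) {θ : L}
    (hθ : aeval θ f = 0) {r : K} :
    (∃ y ∈ K⟮θ⟯, y ^ 2 = algebraMap K L r) ↔
      (∃ s : K, s ^ 2 = r) ∨ (∃ s : K, s ^ 2 = r * (a ^ 2 - 4 * b)) ∨
        ∃ s : K, s ^ 2 = b ∧
          ((∃ t : K, t ^ 2 = r * (-a + 2 * s)) ∨ (∃ t : K, t ^ 2 = r * (-a - 2 * s))) := by
  have hexpand : f = expand K n (X ^ 4 + C a * X ^ 2 + C b) := by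
    simp [hf, ← pow_mul, mul_comm n]
  subst hexpand
  have hdescent := exists_mem_adjoin_sq_eq_iff_of_odd hn hirr hθ (algebraMap K _ r)
  have hquartic := exists_mem_adjoin_biquadratic_root_sq_eq_iff h2
    (of_irreducible_expand hn.pos.ne' hirr) (by rwa [expand_aeval] at hθ) (r := r)
  simp only [exists_sq_eq_iff_isSquare, sub_eq_add_neg (-a), ← mul_neg]
  rw [exists_sq_eq_and_or_neg_iff (p := fun s => IsSquare (r * (-a + 2 * s)))]
  exact hdescent.trans hquartic

end FieldExtension

theorem square_in_dodecic_stem_field_iff (a b : ℚ) (f : ℚ[X])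
    (hf : f = X ^ 12 + C a * X ^ 6 + C b) (hirr : Irreducible f)
    (θ : ℂ) (hθ : aeval θ f = 0) (r : ℚ) (hr : ¬ ∃ s : ℚ, s ^ 2 = r) :
    (∃ y ∈ IntermediateField.adjoin ℚ ({θ} : Set ℂ), y ^ 2 = (r : ℂ)) ↔
      ((∃ s : ℚ, s ^ 2 = r * (a ^ 2 - 4 * b)) ∨
        ∃ s : ℚ, s ^ 2 = b ∧
          ((∃ t : ℚ, t ^ 2 = r * (-a + 2 * s)) ∨
            (∃ t : ℚ, t ^ 2 = r * (-a - 2 * s)))) :=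
  (square_in_dodecic_stem_field_iff_general two_ne_zero (n := 3) (by decide) hf hirr hθ).trans
    (or_iff_right hr)
end

section
/- Let a, b ∈ ℚ and suppose f(x) = x^12 + a·x^6 + b is irreducible over ℚ. Assume: b is a square in ℚ; 3·(4b − a^2) is not a square in ℚ; for every s ∈ ℚ with s^2 = b, neither 3·(a + 2s) nor 3·(a − 2s) is a square in ℚ; and either b is a cube in ℚ or the cubic x^3 − 3·b·x + a·b has a rational root. Then the Galois group of f over ℚ has order 24. -/
open Polynomial

open Module (finrank)

open scoped IntermediateField

/-!
Let `θ` be a root of `f` over the base field `K` and `ω` a primitive sixth root of unity. The sixth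
powers of the roots are the two roots of `T ^ 2 + a * T + b`, whose product is `b`, so the roots are
`ζ * θ` and `ζ * γ / θ` with `ζ ^ 6 = 1` and `γ ^ 6 = b`. As `b` is a square, `K(θ)` contains such a
`γ` as soon as it contains a cube root of `b`. A root of `x ^ 3 - 3 * b * x + a * b` in `K` provides
one: the roots of this cubic are `p + b / p` with `p ^ 3 = b * θ ^ 6`. Hence the splitting field is
`K(θ, ω)`, of degree `12 * 2` provided that `ω ∉ K(θ)`.

Since `[K(θ) : K(θ ^ 3)] = 3` is odd and `ω` is quadratic over `K`, for this last point one may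
replace `θ` by `y = θ ^ 3`, a root of `y ^ 4 + a * y ^ 2 + s ^ 2` where `s ^ 2 = b`. As
`(y ± s / y) ^ 2 = ±2 * s - a`, the field `K(y)` is generated by the square roots of `2 * s - a` and
`-2 * s - a`, and `-3` is a square in it only if one of `-3`, `3 * (a - 2 * s)`, `3 * (a + 2 * s)`,
`3 * (4 * b - a ^ 2)` is a square in `K`.
-/

section
variable {K L : Type*} [Field K] [Field L] [Algebra K L]

theorem finrank_adjoin_simple_eq_natDegree {p : K[X]} (hp : Irreducible p) {x : L}
    (hx : aeval x p = 0) : finrank K K⟮x⟯ = p.natDegree := by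
  have hint : IsIntegral K x := IsAlgebraic.isIntegral ⟨p, hp.ne_zero, hx⟩
  have hlead : p.leadingCoeff⁻¹ ≠ 0 := inv_ne_zero (leadingCoeff_ne_zero.mpr hp.ne_zero)
  rw [IntermediateField.adjoin.finrank hint, ← minpoly.eq_of_irreducible hp hx,
    natDegree_mul_C hlead]

theorem separable_of_natCast_natDegree_ne_zero {p : K[X]} (hp : Irreducible p)
    (hdeg : (p.natDegree : K) ≠ 0) : p.Separable := by
  refine (separable_iff_derivative_ne_zero hp).mpr fun h ↦ ?_
  obtain ⟨m, hm⟩ := Nat.exists_eq_add_one.mpr hp.natDegree_pos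
  have hcoeff : p.leadingCoeff * p.natDegree = 0 := by
    simpa [hm, leadingCoeff, coeff_derivative] using congrArg (coeff · m) h
  exact (mul_ne_zero (leadingCoeff_ne_zero.mpr hp.ne_zero) hdeg) hcoeff

theorem natCard_gal_eq_finrank_adjoin_rootSet {p : K[X]} (hp : p.Separable)
    (hsplit : (p.map (algebraMap K L)).Splits) :
    Nat.card p.Gal = finrank K (IntermediateField.adjoin K (p.rootSet L)) := by
  have := IntermediateField.adjoin_rootSet_isSplittingField hsplit
  rw [Gal.card_of_separable hp]
  exact (IsSplittingField.algEquiv _ p).toLinearEquiv.finrank_eq.symm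

variable (K) in
theorem adjoin_pow_le_adjoin (x : L) (n : ℕ) : K⟮x ^ n⟯ ≤ K⟮x⟯ :=
  IntermediateField.adjoin_simple_le_iff.mpr
    (pow_mem (IntermediateField.mem_adjoin_simple_self K x) n)

theorem le_restrictScalars_adjoin (E : IntermediateField K L) (S : Set L) :
    E ≤ (IntermediateField.adjoin E S).restrictScalars K :=
  fun y hy ↦ (IntermediateField.adjoin E S).algebraMap_mem ⟨y, hy⟩

theorem relfinrank_adjoin_pow {p : K[X]} {n : ℕ} (hn : n ≠ 0) (hp : Irreducible (expand K n p))
    {x : L} (hx : aeval x (expand K n p) = 0) : K⟮x ^ n⟯.relfinrank K⟮x⟯ = n := by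
  have hp' : Irreducible p := of_irreducible_expand hn hp
  have hmul := IntermediateField.finrank_bot_mul_relfinrank (adjoin_pow_le_adjoin K x n)
  rw [finrank_adjoin_simple_eq_natDegree hp hx, natDegree_expand,
    finrank_adjoin_simple_eq_natDegree hp' (by rwa [← expand_aeval])] at hmul
  exact Nat.eq_of_mul_eq_mul_left hp'.natDegree_pos hmul

theorem finrank_adjoin_simple_eq_two {p : K[X]} (hp : p.natDegree = 2) {x : L}
    (hx : aeval x p = 0) (hxK : x ∉ (algebraMap K L).range) : finrank K K⟮x⟯ = 2 := by
  have hp0 : p ≠ 0 := by rintro rfl; simp at hp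
  have hint : IsIntegral K x := IsAlgebraic.isIntegral ⟨p, hp0, hx⟩
  rw [IntermediateField.adjoin.finrank hint]
  exact le_antisymm (hp ▸ natDegree_le_of_dvd (minpoly.dvd K x hx) hp0)
    ((minpoly.two_le_natDegree_iff hint).mpr hxK)

theorem relfinrank_adjoin_simple_eq_two {p : K[X]} (hp : p.natDegree = 2) {x : L}
    (hx : aeval x p = 0) {E : IntermediateField K L} (hxE : x ∉ E) :
    E.relfinrank (E⟮x⟯.restrictScalars K) = 2 := by
  rw [IntermediateField.relfinrank_eq_finrank_of_le (le_restrictScalars_adjoin E {x})]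
  refine finrank_adjoin_simple_eq_two (p := p.map (algebraMap K E)) (by simpa using hp)
    (by simpa using hx) ?_
  rintro ⟨y, rfl⟩
  exact hxE y.2

theorem finrank_adjoin_pair_eq_mul_two {p : K[X]} (hp : p.natDegree = 2) {x y : L}
    (hx : aeval x p = 0) (hxy : x ∉ K⟮y⟯) : finrank K K⟮y, x⟯ = finrank K K⟮y⟯ * 2 := by
  rw [← relfinrank_adjoin_simple_eq_two hp hx hxy, ← IntermediateField.adjoin_simple_adjoin_simple]
  exact (IntermediateField.finrank_bot_mul_relfinrank (le_restrictScalars_adjoin K⟮y⟯ {x})).symm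

theorem notMem_of_odd_relfinrank {p : K[X]} (hp : p.natDegree = 2) {x : L}
    (hx : aeval x p = 0) {E F : IntermediateField K L} (hEF : E ≤ F)
    (hodd : Odd (E.relfinrank F)) (hxE : x ∉ E) : x ∉ F := by
  intro hxF
  have hxF' : E⟮x⟯.restrictScalars K ≤ F := by
    rw [IntermediateField.restrictScalars_adjoin, IntermediateField.adjoin_le_iff]
    exact Set.union_subset hEF (Set.singleton_subset_iff.mpr hxF)
  have hmul := IntermediateField.relfinrank_mul_relfinrank (le_restrictScalars_adjoin E {x}) hxF'
  rw [relfinrank_adjoin_simple_eq_two hp hx hxE] at hmul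
  exact Nat.not_even_iff_odd.mpr hodd (hmul ▸ even_two_mul _)

theorem exists_eq_add_mul_of_mem_adjoin_sqrt {c : K} {u x : L} (hu : u ^ 2 = algebraMap K L c)
    (hx : x ∈ K⟮u⟯) : ∃ p q : K, x = algebraMap K L p + algebraMap K L q * u := by
  have hroot : aeval u (X ^ 2 - C c) = 0 := by simp [hu]
  have hmonic : (X ^ 2 - C c).Monic := monic_X_pow_sub_C c two_ne_zero
  have halg : IsAlgebraic K u := ⟨_, hmonic.ne_zero, hroot⟩
  rw [← IntermediateField.mem_toSubalgebra,
    IntermediateField.adjoin_simple_toSubalgebra_of_isAlgebraic halg,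
    Algebra.adjoin_singleton_eq_range_aeval] at hx
  obtain ⟨P, rfl⟩ := hx
  have hdeg : (P %ₘ (X ^ 2 - C c)).natDegree < 2 := by
    have hdeg' : (X ^ 2 - C c).natDegree = 2 := natDegree_X_pow_sub_C
    exact (natDegree_modByMonic_lt P hmonic fun h ↦ by simp [h] at hdeg').trans_eq hdeg'
  obtain ⟨q, p, hP⟩ := exists_eq_X_add_C_of_natDegree_le_one (Nat.le_of_lt_succ hdeg)
  refine ⟨p, q, ?_⟩
  change aeval u P = _
  rw [← aeval_modByMonic_eq_self_of_root hroot, hP]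
  simp [add_comm]

theorem isSquare_or_isSquare_mul_of_isSquare_adjoin_sqrt (h2 : (2 : K) ≠ 0) {c d : K} {u : L}
    (hu : u ^ 2 = algebraMap K L c) (hd : IsSquare (algebraMap K K⟮u⟯ d)) :
    IsSquare d ∨ IsSquare (d * c) := by
  obtain ⟨x, hx⟩ := hd
  obtain ⟨p, q, hpq⟩ := exists_eq_add_mul_of_mem_adjoin_sqrt hu x.2
  have hinj := FaithfulSMul.algebraMap_injective K L
  have hd : algebraMap K L d = (algebraMap K L p + algebraMap K L q * u) ^ 2 := by
    rw [← hpq, sq]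
    exact congrArg Subtype.val hx
  rcases eq_or_ne p 0 with rfl | hp
  · refine .inr ⟨q * c, hinj ?_⟩
    simp only [map_mul, map_zero] at hd ⊢
    linear_combination algebraMap K L c * hd + algebraMap K L c * algebraMap K L q ^ 2 * hu
  rcases eq_or_ne q 0 with rfl | hq
  · refine .inl ⟨p, hinj ?_⟩
    simp only [map_mul, map_zero] at hd ⊢
    linear_combination hd
  · -- the cross term `2 * p * q * u` of the square forces `u`, hence `x`, into `K`
    set t : K := (d - p ^ 2 - q ^ 2 * c) / (2 * p * q) with ht
    have hut : u = algebraMap K L t := by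
      have hne : algebraMap K L (2 * p * q) ≠ 0 := by simp [h2, hp, hq]
      rw [ht, map_div₀, eq_div_iff hne]
      simp only [map_sub, map_mul, map_pow, map_ofNat]
      linear_combination -hd - algebraMap K L q ^ 2 * hu
    refine .inl ⟨p + q * t, hinj ?_⟩
    rw [hd, hut, map_mul, map_add, map_mul, sq]

theorem isSquare_of_mem_adjoin_sqrt_pair (h2 : (2 : K) ≠ 0) {c d e : K} {u v x : L}
    (hu : u ^ 2 = algebraMap K L c) (hv : v ^ 2 = algebraMap K L e)
    (hx : x ^ 2 = algebraMap K L d) (hmem : x ∈ K⟮u, v⟯) :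
    IsSquare d ∨ IsSquare (d * c) ∨ IsSquare (d * e) ∨ IsSquare (d * e * c) := by
  have h2' : (2 : K⟮u⟯) ≠ 0 := map_ofNat (algebraMap K K⟮u⟯) 2 ▸ (_root_.map_ne_zero _).mpr h2
  rw [← IntermediateField.adjoin_simple_adjoin_simple, IntermediateField.mem_restrictScalars]
    at hmem
  have hd : IsSquare (algebraMap K⟮u⟯ K⟮u⟯⟮v⟯ (algebraMap K K⟮u⟯ d)) :=
    ⟨⟨x, hmem⟩, Subtype.ext (hx.symm.trans (sq x))⟩
  have descend {k : K} := isSquare_or_isSquare_mul_of_isSquare_adjoin_sqrt (d := k) h2 hu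
  have hv' : v ^ 2 = algebraMap K⟮u⟯ L (algebraMap K K⟮u⟯ e) := hv
  rcases isSquare_or_isSquare_mul_of_isSquare_adjoin_sqrt h2' hv' hd with h | h
  · exact (descend h).imp_right .inl
  · rw [← map_mul] at h
    exact .inr (.inr (descend h))

theorem isSquare_of_mem_adjoin_root_quartic (h2 : (2 : K) ≠ 0) {a s d : K} {x y : L} (hy0 : y ≠ 0)
    (hy : y ^ 4 + algebraMap K L a * y ^ 2 + algebraMap K L s ^ 2 = 0)
    (hx : x ^ 2 = algebraMap K L d) (hmem : x ∈ K⟮y⟯) :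
    IsSquare d ∨ IsSquare (d * (2 * s - a)) ∨ IsSquare (d * (-2 * s - a)) ∨
      IsSquare (d * (-2 * s - a) * (2 * s - a)) := by
  set u : L := y + algebraMap K L s / y with hu
  set v : L := y - algebraMap K L s / y with hv
  have hu2 : u ^ 2 = algebraMap K L (2 * s - a) := by
    simp only [hu, map_sub, map_mul, map_ofNat]
    field_simp
    linear_combination hy
  have hv2 : v ^ 2 = algebraMap K L (-2 * s - a) := by
    simp only [hv, map_sub, map_mul, map_neg, map_ofNat]
    field_simp
    linear_combination hy
  have hyuv : y ∈ K⟮u, v⟯ := by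
    have h2L : (2 : L) ≠ 0 := map_ofNat (algebraMap K L) 2 ▸ (_root_.map_ne_zero _).mpr h2
    have hyuv : y = (u + v) / 2 := by
      rw [hu, hv]
      field_simp
      ring
    rw [hyuv]
    exact div_mem (add_mem (IntermediateField.subset_adjoin K _ (.inl rfl))
      (IntermediateField.subset_adjoin K _ (.inr rfl))) (ofNat_mem _ 2)
  exact isSquare_of_mem_adjoin_sqrt_pair h2 hu2 hv2 hx
    (IntermediateField.adjoin_simple_le_iff.mpr hyuv hmem)

theorem pow_eq_pow_or_mul_pow_eq_of_trinomial {R : Type*} [CommRing R] [IsDomain R] {n : ℕ}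
    {a b x y : R} (hx : x ^ (2 * n) + a * x ^ n + b = 0) (hy : y ^ (2 * n) + a * y ^ n + b = 0) :
    x ^ n = y ^ n ∨ (x * y) ^ n = b := by
  have hprod : (x ^ n - y ^ n) * (x ^ n + y ^ n + a) = 0 := by linear_combination hx - hy
  refine (mul_eq_zero.mp hprod).imp sub_eq_zero.mp fun h ↦ ?_
  linear_combination y ^ n * h - hy

theorem mem_of_pow_eq_pow {E : IntermediateField K L} {n : ℕ} [NeZero n] {ω x y : L}
    (hω : IsPrimitiveRoot ω n) (hωE : ω ∈ E) (hyE : y ∈ E) (h : x ^ n = y ^ n) : x ∈ E := by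
  rcases eq_or_ne y 0 with rfl | hy
  · rw [zero_pow (NeZero.ne n)] at h
    exact eq_zero_of_pow_eq_zero h ▸ E.zero_mem
  · obtain ⟨i, -, hi⟩ := hω.eq_pow_of_pow_eq_one (ξ := x / y)
      (by rw [div_pow, h, div_self (pow_ne_zero n hy)])
    rw [← div_mul_cancel₀ x hy, ← hi]
    exact mul_mem (pow_mem hωE i) hyE

theorem adjoin_rootSet_trinomial {n : ℕ} [NeZero n] {a b : K} (hb : b ≠ 0) {ω γ θ : L}
    (hω : IsPrimitiveRoot ω n) (hγ : γ ^ n = algebraMap K L b) (hγmem : γ ∈ K⟮θ, ω⟯)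
    (hθ : aeval θ (X ^ (2 * n) + C a * X ^ n + C b) = 0) :
    IntermediateField.adjoin K ((X ^ (2 * n) + C a * X ^ n + C b).rootSet L) = K⟮θ, ω⟯ := by
  set f : K[X] := X ^ (2 * n) + C a * X ^ n + C b with hf
  have hf0 : f ≠ 0 := fun h ↦ hb (by simpa [hf, NeZero.ne n] using congrArg (eval 0) h)
  have haeval (x : L) :
      aeval x f = x ^ (2 * n) + algebraMap K L a * x ^ n + algebraMap K L b := by simp [hf]
  have hθ0 : θ ≠ 0 := by
    rintro rfl
    simp [haeval, NeZero.ne n, hb] at hθ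
  have hθmem : θ ∈ K⟮θ, ω⟯ := IntermediateField.subset_adjoin K _ (.inl rfl)
  have hωmem : ω ∈ K⟮θ, ω⟯ := IntermediateField.subset_adjoin K _ (.inr rfl)
  apply le_antisymm <;> rw [IntermediateField.adjoin_le_iff]
  · intro x hx
    have hx' := (mem_rootSet.mp hx).2
    rw [haeval] at hx' hθ
    rcases pow_eq_pow_or_mul_pow_eq_of_trinomial hx' hθ with h | h
    · exact mem_of_pow_eq_pow hω hωmem hθmem h
    · rw [← mul_div_cancel_right₀ x hθ0]
      exact div_mem (mem_of_pow_eq_pow hω hωmem hγmem (h.trans hγ.symm)) hθmem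
  · have hθroot : θ ∈ f.rootSet L := mem_rootSet.mpr ⟨hf0, hθ⟩
    have hωθroot : ω * θ ∈ f.rootSet L := by
      refine mem_rootSet.mpr ⟨hf0, ?_⟩
      rwa [haeval, pow_mul', mul_pow, hω.pow_eq_one, one_mul, ← pow_mul', ← haeval]
    have hθadj := IntermediateField.subset_adjoin K _ hθroot
    have hωadj := div_mem (IntermediateField.subset_adjoin K _ hωθroot) hθadj
    rw [mul_div_cancel_right₀ ω hθ0] at hωadj
    exact Set.insert_subset hθadj (Set.singleton_subset_iff.mpr hωadj)

section
variable {a b r s β θ : K}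

theorem div_pow_six_eq_of_sq_eq_of_pow_three_eq (hb : b ≠ 0) (hs : s ^ 2 = b) (hβ : β ^ 3 = b) :
    (s / β) ^ 6 = b := by
  calc (s / β) ^ 6 = (s ^ 2) ^ 3 / (β ^ 3) ^ 2 := by rw [div_pow, ← pow_mul, ← pow_mul]
    _ = b := by
      rw [hs, hβ]
      field_simp

theorem sq_ne_of_cubic_eq_zero (hb : b ≠ 0) (hdisc : 4 * b - a ^ 2 ≠ 0)
    (hr : r ^ 3 - 3 * b * r + a * b = 0) : r ^ 2 ≠ b := by
  rintro rfl
  have ha : a = 2 * r := mul_left_cancel₀ hb (by linear_combination hr)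
  exact hdisc (by rw [ha]; ring)

theorem exists_pow_three_eq_of_cubic_eq_zero (hθ0 : θ ≠ 0)
    (hθ : θ ^ 12 + a * θ ^ 6 + b = 0) (hr : r ^ 3 - 3 * b * r + a * b = 0) (hrb : r ^ 2 ≠ b) :
    ∃ β, β ^ 3 = b := by
  have hne : r ^ 2 - b ≠ 0 := sub_ne_zero.mpr hrb
  -- `p` is the cube root of `b * θ ^ 6` with `p + b / p = r`
  obtain ⟨p, hp⟩ : ∃ p, p * (r ^ 2 - b) = b * (θ ^ 6 + r) := ⟨_, div_mul_cancel₀ _ hne⟩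
  have hquad : p ^ 2 - r * p + b = 0 := by
    apply mul_left_cancel₀ (pow_ne_zero 2 hne)
    linear_combination (p * (r ^ 2 - b) + b * (θ ^ 6 + r) - r * (r ^ 2 - b)) * hp +
      b ^ 2 * hθ - b * θ ^ 6 * hr
  have hcube : p ^ 3 = b * θ ^ 6 := by linear_combination (p + r) * hquad + hp
  refine ⟨p / θ ^ 2, ?_⟩
  rw [div_pow, hcube]
  field_simp

end

theorem exists_pow_six_eq {a b : K} (hb : b ≠ 0) (hdisc : 4 * b - a ^ 2 ≠ 0)
    (hb_sq : ∃ s : K, s ^ 2 = b)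
    (hcr : (∃ c : K, c ^ 3 = b) ∨ ∃ r : K, r ^ 3 - 3 * b * r + a * b = 0) {θ : L}
    (hθ : θ ^ 12 + algebraMap K L a * θ ^ 6 + algebraMap K L b = 0) :
    ∃ γ : L, γ ^ 6 = algebraMap K L b := by
  let φ := algebraMap K L
  have hφb : φ b ≠ 0 := (_root_.map_ne_zero φ).mpr hb
  have hθ0 : θ ≠ 0 := by
    rintro rfl
    exact hφb (by simpa using hθ)
  obtain ⟨s, hs⟩ := hb_sq
  obtain ⟨β, hβ⟩ : ∃ β, β ^ 3 = φ b := by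
    rcases hcr with ⟨c, hc⟩ | ⟨r, hr⟩
    · exact ⟨φ c, by rw [← map_pow, hc]⟩
    · have hrL : φ r ^ 3 - 3 * φ b * φ r + φ a * φ b = 0 := by
        simpa only [map_sub, map_add, map_mul, map_pow, map_ofNat, map_zero] using congrArg φ hr
      have hrb : φ r ^ 2 ≠ φ b := by
        rw [← map_pow]
        exact φ.injective.ne (sq_ne_of_cubic_eq_zero hb hdisc hr)
      exact exists_pow_three_eq_of_cubic_eq_zero hθ0 hθ hrL hrb
  exact ⟨φ s / β, div_pow_six_eq_of_sq_eq_of_pow_three_eq hφb (by rw [← map_pow, hs]) hβ⟩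

theorem exists_mem_adjoin_pow_six_eq {a b : K} (hb : b ≠ 0) (hdisc : 4 * b - a ^ 2 ≠ 0)
    (hb_sq : ∃ s : K, s ^ 2 = b)
    (hcr : (∃ c : K, c ^ 3 = b) ∨ ∃ r : K, r ^ 3 - 3 * b * r + a * b = 0) {θ : L}
    (hθ : aeval θ (X ^ 12 + C a * X ^ 6 + C b) = 0) : ∃ γ ∈ K⟮θ⟯, γ ^ 6 = algebraMap K L b := by
  have hgen : IntermediateField.AdjoinSimple.gen K θ ^ 12
      + algebraMap K K⟮θ⟯ a * IntermediateField.AdjoinSimple.gen K θ ^ 6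
      + algebraMap K K⟮θ⟯ b = 0 := Subtype.ext (by simpa using hθ)
  obtain ⟨γ, hγ⟩ := exists_pow_six_eq hb hdisc hb_sq hcr hgen
  exact ⟨γ, γ.2, congrArg Subtype.val hγ⟩

theorem natDegree_cyclotomic_six (R : Type*) [Ring R] [Nontrivial R] :
    (cyclotomic 6 R).natDegree = 2 :=
  natDegree_cyclotomic 6 R

theorem aeval_cyclotomic_eq_zero {n : ℕ} [NeZero n] {ω : L} (hω : IsPrimitiveRoot ω n) :
    aeval ω (cyclotomic n K) = 0 := by
  rw [aeval_def, ← eval_map, map_cyclotomic]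
  exact hω.isRoot_cyclotomic (NeZero.pos n)

theorem two_mul_sub_one_sq_of_isPrimitiveRoot_six {ω : L} (hω : IsPrimitiveRoot ω 6) :
    (2 * ω - 1) ^ 2 = -3 := by
  have h : ω ^ 2 - ω + 1 = 0 := by
    simpa [cyclotomic_six] using hω.isRoot_cyclotomic (by norm_num)
  linear_combination 4 * h

theorem two_ne_zero_of_not_isSquare_neg_three (h : ¬ IsSquare (-3 : K)) : (2 : K) ≠ 0 :=
  fun h2 ↦ h ⟨1, by linear_combination -2 * h2⟩

theorem three_ne_zero_of_not_isSquare_neg_three (h : ¬ IsSquare (-3 : K)) : (3 : K) ≠ 0 :=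
  fun h3 ↦ h ⟨0, by linear_combination -h3⟩

theorem primitiveRoot_six_notMem_adjoin_root_quartic {a s : K} (hneg : ¬ IsSquare (-3 : K))
    (hd : ¬ IsSquare (3 * (4 * s ^ 2 - a ^ 2))) (h₁ : ¬ IsSquare (3 * (a + 2 * s)))
    (h₂ : ¬ IsSquare (3 * (a - 2 * s))) {ω y : L} (hω : IsPrimitiveRoot ω 6) (hy0 : y ≠ 0)
    (hy : y ^ 4 + algebraMap K L a * y ^ 2 + algebraMap K L s ^ 2 = 0) : ω ∉ K⟮y⟯ := by
  intro hmem
  have h2 : (2 : K) ≠ 0 := two_ne_zero_of_not_isSquare_neg_three hneg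
  have hδ : (2 * ω - 1) ^ 2 = algebraMap K L (-3) := by
    rw [two_mul_sub_one_sq_of_isPrimitiveRoot_six hω, map_neg, map_ofNat]
  have hδmem : 2 * ω - 1 ∈ K⟮y⟯ := sub_mem (mul_mem (ofNat_mem _ 2) hmem) (one_mem _)
  rcases isSquare_of_mem_adjoin_root_quartic h2 hy0 hy hδ hδmem with h | h | h | h
  · exact hneg h
  · exact h₂ (by convert h using 1; ring)
  · exact h₁ (by convert h using 1; ring)
  · exact hd (by convert h using 1; ring)

theorem primitiveRoot_six_notMem_adjoin_root {a b s : K} (hs : s ^ 2 = b)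
    (hirr : Irreducible (X ^ 12 + C a * X ^ 6 + C b)) (hneg : ¬ IsSquare (-3 : K))
    (hd : ¬ IsSquare (3 * (4 * b - a ^ 2))) (h₁ : ¬ IsSquare (3 * (a + 2 * s)))
    (h₂ : ¬ IsSquare (3 * (a - 2 * s))) {ω θ : L} (hω : IsPrimitiveRoot ω 6) (hθ0 : θ ≠ 0)
    (hθ : aeval θ (X ^ 12 + C a * X ^ 6 + C b) = 0) : ω ∉ K⟮θ⟯ := by
  have hexpand : expand K 3 (X ^ 4 + C a * X ^ 2 + C b) = X ^ 12 + C a * X ^ 6 + C b := by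
    simp [← pow_mul]
  rw [← hexpand] at hirr hθ
  have hodd : Odd (K⟮θ ^ 3⟯.relfinrank K⟮θ⟯) := by
    rw [relfinrank_adjoin_pow three_ne_zero hirr hθ]
    decide
  refine notMem_of_odd_relfinrank (natDegree_cyclotomic_six K) (aeval_cyclotomic_eq_zero hω)
    (adjoin_pow_le_adjoin K θ 3) hodd ?_
  subst hs
  refine primitiveRoot_six_notMem_adjoin_root_quartic hneg hd h₁ h₂ hω (pow_ne_zero 3 hθ0) ?_
  simpa [← pow_mul] using hθ

theorem separable_of_irreducible_of_natDegree_eq_twelve (hneg : ¬ IsSquare (-3 : K)) {p : K[X]}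
    (hp : Irreducible p) (hdeg : p.natDegree = 12) : p.Separable := by
  have h2 : (2 : K) ≠ 0 := two_ne_zero_of_not_isSquare_neg_three hneg
  have h3 : (3 : K) ≠ 0 := three_ne_zero_of_not_isSquare_neg_three hneg
  refine separable_of_natCast_natDegree_ne_zero hp ?_
  rw [hdeg, Nat.cast_ofNat, show (12 : K) = 2 * 2 * 3 by norm_num]
  exact mul_ne_zero (mul_ne_zero h2 h2) h3

theorem neZero_six_of_not_isSquare_neg_three (hneg : ¬ IsSquare (-3 : K)) :
    NeZero ((6 : ℕ) : K) := by
  constructor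
  rw [Nat.cast_ofNat, show (6 : K) = 2 * 3 by norm_num]
  exact mul_ne_zero (two_ne_zero_of_not_isSquare_neg_three hneg)
    (three_ne_zero_of_not_isSquare_neg_three hneg)

theorem isSquare_iff_exists_sq_eq {M : Type*} [Monoid M] {x : M} : IsSquare x ↔ ∃ t, t ^ 2 = x := by
  simp only [isSquare_iff_exists_sq, eq_comm]

theorem gal_order_twentyfour_of_12T10_general (hneg : ¬ ∃ t : K, t ^ 2 = -3) (a b : K) (f : K[X])
    (hf : f = X ^ 12 + C a * X ^ 6 + C b) (hirr : Irreducible f)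
    (hb_sq : ∃ s : K, s ^ 2 = b)
    (hd : ¬ ∃ s : K, s ^ 2 = 3 * (4 * b - a ^ 2))
    (hsq : ∀ s : K, s ^ 2 = b →
      (¬ ∃ t : K, t ^ 2 = 3 * (a + 2 * s)) ∧ ¬ ∃ t : K, t ^ 2 = 3 * (a - 2 * s))
    (hcr : (∃ c : K, c ^ 3 = b) ∨ ∃ r : K, r ^ 3 - 3 * b * r + a * b = 0) :
    Nat.card f.Gal = 24 := by
  simp only [← isSquare_iff_exists_sq_eq] at hneg hd hsq
  obtain ⟨s, hs⟩ := hb_sq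
  subst hf
  have hdeg : (X ^ 12 + C a * X ^ 6 + C b).natDegree = 12 := by compute_degree!
  have hb : b ≠ 0 := by
    rintro rfl
    exact hirr.not_isRoot_of_natDegree_ne_one (by rw [hdeg]; decide) (x := 0) (by simp)
  have hdisc : 4 * b - a ^ 2 ≠ 0 := fun h ↦ hd (by simp [h])
  have := neZero_six_of_not_isSquare_neg_three hneg
  obtain ⟨ω, hω⟩ := HasEnoughRootsOfUnity.exists_primitiveRoot (AlgebraicClosure K) 6
  obtain ⟨θ, hθ⟩ := IsAlgClosed.exists_aeval_eq_zero (AlgebraicClosure K) _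
    (degree_pos_of_irreducible hirr).ne'
  have hθ0 : θ ≠ 0 := by
    rintro rfl
    simp [hb] at hθ
  obtain ⟨γ, hγmem, hγ⟩ := exists_mem_adjoin_pow_six_eq hb hdisc ⟨s, hs⟩ hcr hθ
  have hωθ : ω ∉ K⟮θ⟯ :=
    primitiveRoot_six_notMem_adjoin_root hs hirr hneg hd (hsq s hs).1 (hsq s hs).2 hω hθ0 hθ
  rw [natCard_gal_eq_finrank_adjoin_rootSet (L := AlgebraicClosure K)
      (separable_of_irreducible_of_natDegree_eq_twelve hneg hirr hdeg) (IsAlgClosed.splits _),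
    adjoin_rootSet_trinomial (n := 6) hb hω hγ (IntermediateField.adjoin.mono K _ _ (by simp) hγmem)
      hθ, finrank_adjoin_pair_eq_mul_two (natDegree_cyclotomic_six K)
      (aeval_cyclotomic_eq_zero hω) hωθ, finrank_adjoin_simple_eq_natDegree hirr hθ, hdeg]

end

theorem gal_order_twentyfour_of_12T10 (a b : ℚ) (f : ℚ[X])
    (hf : f = X ^ 12 + C a * X ^ 6 + C b) (hirr : Irreducible f)
    (hb_sq : ∃ s : ℚ, s ^ 2 = b)
    (hd : ¬ ∃ s : ℚ, s ^ 2 = 3 * (4 * b - a ^ 2))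
    (hsq : ∀ s : ℚ, s ^ 2 = b → (¬ ∃ t : ℚ, t ^ 2 = 3 * (a + 2 * s)) ∧ ¬ ∃ t : ℚ, t ^ 2 = 3 * (a - 2 * s))
    (hcr : (∃ c : ℚ, c ^ 3 = b) ∨ ∃ r : ℚ, r ^ 3 - 3 * b * r + a * b = 0) :
    Nat.card f.Gal = 24 :=
  gal_order_twentyfour_of_12T10_general (fun ⟨t, ht⟩ ↦ by linarith [sq_nonneg t]) a b f hf hirr
    hb_sq hd hsq hcr
end
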